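/- There exists a unique family (e_i')_{i∈I} of K-linear endomorphisms of U_q^-(g) such that e_i'(1)=0 and e_i'(f_j a) = δ_{ij} a + q^{-(α_i,α_j)} f_j e_i'(a) for all i,j∈I and a∈U_q^-(g) (i.e. the commutation relation e_i' f_j = q^{-(α_i,α_j)} f_j e_i' + δ_{ij} holds between e_i' and left multiplication by f_j). Moreover these operators satisfy the twisted Leibniz rule e_i'(ab) = e_i'(a)b + Ad(t_i)(a)·e_i'(b) for all a,b∈U_q^-(g) with a homogeneous. -/

import Mathlib

noncomputable section
open scoped BigOperators

abbrev KK : Type := RatFunc ℚ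

def qq : KK := RatFunc.X

def qZ (n : ℤ) : KK := qq ^ n

def qInt (d : ℤ) (k : ℕ) : KK := (qq ^ (d * k) - qq ^ (-(d * k : ℤ))) / (qq ^ d - qq ^ (-d : ℤ))

def qFact (d : ℤ) (k : ℕ) : KK := ∏ m ∈ Finset.range k, qInt d (m + 1)

variable {I : Type} [DecidableEq I]

/-- `b = 1 - (α_i^∨, α_j)` -/
def serreN (A : I → I → ℤ) (i j : I) : ℕ := (1 - 2 * A i j / A i i).toNat

def fSerre (A : I → I → ℤ) (i j : I) : FreeAlgebra KK I :=
  ∑ k ∈ Finset.range (serreN A i j + 1),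
    ((-1 : KK) ^ k * (qFact (A i i / 2) k)⁻¹ * (qFact (A i i / 2) (serreN A i j - k))⁻¹) •
      ((FreeAlgebra.ι KK i) ^ k * FreeAlgebra.ι KK j * (FreeAlgebra.ι KK i) ^ (serreN A i j - k))

inductive SerreRel (A : I → I → ℤ) : FreeAlgebra KK I → FreeAlgebra KK I → Prop
  | serre (i j : I) (h : i ≠ j) : SerreRel A (fSerre A i j) 0

abbrev Um (A : I → I → ℤ) : Type := RingQuot (SerreRel A)

def fgen (A : I → I → ℤ) (i : I) : Um A := RingQuot.mkAlgHom KK (SerreRel A) (FreeAlgebra.ι KK i)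

def IsWt (A : I → I → ℤ) (ν : I →₀ ℕ) (a : Um A) : Prop :=
  a ∈ Submodule.span KK {x | ∃ L : List I, (∀ i, L.count i = ν i) ∧ x = (L.map (fgen A)).prod}

def IsCartan (A : I → I → ℤ) : Prop :=
  (∀ i j, A i j = A j i) ∧ (∀ i, 0 < A i i) ∧ (∀ i, 2 ∣ A i i) ∧
  (∀ i j, i ≠ j → A i j ≤ 0) ∧ (∀ i j, A i i ∣ 2 * A i j)

def EprimRel (A : I → I → ℤ) (E : I → Module.End KK (Um A)) : Prop :=
  (∀ i, E i 1 = 0) ∧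
  ∀ i j (a : Um A), E i (fgen A j * a) =
    (if i = j then a else 0) + qZ (-(A i j)) • (fgen A j * (E i a))


/-!
A `σ`-twisted derivation `e` of an algebra is the same as an algebra homomorphism
`a ↦ !![σ a, e a; 0, a]` into `2 × 2` matrices. For `σ = Ad(t_l)` and `e = e_l'` the images of the
generators are forced, so existence of `e_l'` amounts to these matrices satisfying the `q`-Serre
relations. On the diagonal this is homogeneity. In the upper right corner the sum telescopes when
`l = i`, and reduces to the vanishing `∑ (-1) ^ k [n + 1 choose k] p ^ (n * k) = 0` of the
`q`-binomial theorem when `l = j`. Uniqueness and the twisted Leibniz rule follow from the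
commutation relation by induction on monomials.
-/

section QuantumInt

variable {K : Type*} [Field K]

/-- The quantum integer `[k]_p = p ^ (k - 1) + p ^ (k - 3) + ⋯ + p ^ (1 - k)`. Unlike the quotient
`(p ^ k - p ^ (-k)) / (p - p ^ (-1))`, the sum is also meaningful at `p = ±1`. -/
def quantumInt (p : K) (k : ℕ) : K := ∑ i ∈ Finset.range k, p⁻¹ ^ i * p ^ (k - 1 - i)

/-- The quantum factorial `[k]_p! = [1]_p ⋯ [k]_p`. -/
def quantumFactorial (p : K) (k : ℕ) : K := ∏ m ∈ Finset.range k, quantumInt p (m + 1)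

@[simp]
lemma quantumInt_zero (p : K) : quantumInt p 0 = 0 := Finset.sum_range_zero _

lemma quantumInt_succ (p : K) (k : ℕ) : quantumInt p (k + 1) = p * quantumInt p k + p⁻¹ ^ k := by
  rw [quantumInt, Nat.add_sub_cancel, geom_sum₂_succ_eq, add_comm, quantumInt]

lemma quantumInt_add (p : K) (k m : ℕ) :
    quantumInt p (k + m) = p⁻¹ ^ m * quantumInt p k + p ^ k * quantumInt p m := by
  induction k with
  | zero => simp
  | succ k ih =>
    rw [Nat.add_right_comm, quantumInt_succ, ih, quantumInt_succ]
    ring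

lemma quantumInt_mul_sub_inv (p : K) (k : ℕ) :
    quantumInt p k * (p - p⁻¹) = p ^ k - p⁻¹ ^ k := by
  rw [quantumInt]
  linear_combination -geom_sum₂_mul p⁻¹ p k

lemma pow_sub_inv_pow_ne_zero {p : K} (hp₀ : p ≠ 0) (hp : ¬IsOfFinOrder p) (k : ℕ) :
    p ^ (k + 1) - p⁻¹ ^ (k + 1) ≠ 0 := by
  intro h
  refine hp (isOfFinOrder_iff_pow_eq_one.2 ⟨(k + 1) + (k + 1), by lia, ?_⟩)
  rw [pow_add]
  nth_rw 1 [sub_eq_zero.1 h]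
  rw [← mul_pow, inv_mul_cancel₀ hp₀, one_pow]

lemma quantumInt_succ_ne_zero {p : K} (hp₀ : p ≠ 0) (hp : ¬IsOfFinOrder p) (k : ℕ) :
    quantumInt p (k + 1) ≠ 0 :=
  left_ne_zero_of_mul (quantumInt_mul_sub_inv p (k + 1) ▸ pow_sub_inv_pow_ne_zero hp₀ hp k)

lemma quantumInt_eq_div {p : K} (hp₀ : p ≠ 0) (hp : ¬IsOfFinOrder p) (k : ℕ) :
    quantumInt p k = (p ^ k - p⁻¹ ^ k) / (p - p⁻¹) := by
  have hsub : p - p⁻¹ ≠ 0 := by simpa using pow_sub_inv_pow_ne_zero hp₀ hp 0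
  rw [eq_div_iff hsub, quantumInt_mul_sub_inv]

lemma ne_zero_of_quantumInt_ne_zero {p : K} (hp : ∀ k, quantumInt p (k + 1) ≠ 0) : p ≠ 0 := by
  rintro rfl
  exact hp 1 (by simp [quantumInt_succ])

lemma sum_inv_sq_pow_eq_quantumInt {p : K} (hp₀ : p ≠ 0) (k : ℕ) :
    ∑ m ∈ Finset.range k, (p⁻¹ ^ 2) ^ m = p * p⁻¹ ^ k * quantumInt p k := by
  induction k with
  | zero => simp
  | succ k ih =>
    have hpp : p * p⁻¹ = 1 := mul_inv_cancel₀ hp₀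
    rw [Finset.sum_range_succ, ih, quantumInt_succ]
    linear_combination (-p⁻¹ ^ k * p * quantumInt p k - p⁻¹ ^ k * p⁻¹ ^ k) * hpp

lemma quantumFactorial_succ (p : K) (k : ℕ) :
    quantumFactorial p (k + 1) = quantumFactorial p k * quantumInt p (k + 1) :=
  Finset.prod_range_succ _ _

lemma quantumFactorial_ne_zero {p : K} (hp : ∀ k, quantumInt p (k + 1) ≠ 0) (k : ℕ) :
    quantumFactorial p k ≠ 0 :=
  Finset.prod_ne_zero_iff.2 fun m _ ↦ hp m

end QuantumInt

section SerreElement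

open Finset.HasAntidiagonal (antidiagonal mem_antidiagonal)

variable {K : Type*} [Field K] {R : Type*} [Ring R] [Algebra K R]

/-- The coefficient `(-1) ^ k / ([k]_p! [m]_p!)` of `x ^ k * y * x ^ m` in the `q`-Serre relation
of degree `k + m` in `x`. -/
def serreCoeff (p : K) (k m : ℕ) : K :=
  (-1) ^ k * (quantumFactorial p k)⁻¹ * (quantumFactorial p m)⁻¹

/-- The left-hand side `∑ (-1) ^ k x ^ (k) y x ^ (N - k)` of the `q`-Serre relation of degree `N`,
where `x ^ (k)` is the divided power `x ^ k / [k]_p!`. -/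
def serreElement (p : K) (N : ℕ) (x y : R) : R :=
  ∑ km ∈ antidiagonal N, serreCoeff p km.1 km.2 • (x ^ km.1 * y * x ^ km.2)

lemma sum_antidiagonal_add_eq_zero {M : Type*} [AddCommGroup M] {P Q : ℕ → ℕ → M} (N : ℕ)
    (hP : ∀ m, P 0 m = 0) (hQ : ∀ k, Q k 0 = 0)
    (hPQ : ∀ k m, k + m + 1 = N → P (k + 1) m + Q k (m + 1) = 0) :
    ∑ km ∈ antidiagonal N, (P km.1 km.2 + Q km.1 km.2) = 0 := by
  cases N with
  | zero => simp [hP, hQ]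
  | succ n =>
    rw [Finset.sum_add_distrib, Finset.Nat.sum_antidiagonal_succ,
      Finset.Nat.sum_antidiagonal_succ', hP, hQ, zero_add, zero_add, ← Finset.sum_add_distrib]
    refine Finset.sum_eq_zero fun km hkm ↦ hPQ _ _ ?_
    rw [mem_antidiagonal.1 hkm]

lemma serreCoeff_succ_left_mul {p : K} (hp : ∀ k, quantumInt p (k + 1) ≠ 0) (k m : ℕ) :
    serreCoeff p (k + 1) m * quantumInt p (k + 1) =
      -(serreCoeff p k (m + 1) * quantumInt p (m + 1)) := by
  have hk := hp k
  have hm := hp m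
  have hk_fact := quantumFactorial_ne_zero hp k
  have hm_fact := quantumFactorial_ne_zero hp m
  simp only [serreCoeff, quantumFactorial_succ]
  field_simp
  ring

lemma sum_serreCoeff_mul_pow_eq_zero {p : K} (hp : ∀ k, quantumInt p (k + 1) ≠ 0) (n : ℕ) :
    ∑ km ∈ antidiagonal (n + 1), serreCoeff p km.1 km.2 * (p ^ n) ^ km.1 = 0 := by
  have hp₀ := ne_zero_of_quantumInt_ne_zero hp
  refine (mul_eq_zero.1 ?_).resolve_left (hp n)
  let P (k m : ℕ) : K := serreCoeff p k m * (p ^ n) ^ k * (p⁻¹ ^ m * quantumInt p k)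
  let Q (k m : ℕ) : K := serreCoeff p k m * (p ^ n) ^ k * (p ^ k * quantumInt p m)
  calc
    _ = ∑ km ∈ antidiagonal (n + 1), (P km.1 km.2 + Q km.1 km.2) := by
      rw [Finset.mul_sum]
      refine Finset.sum_congr rfl fun km hkm ↦ ?_
      rw [← mem_antidiagonal.1 hkm, quantumInt_add]
      ring
    _ = 0 := by
      refine sum_antidiagonal_add_eq_zero _ (by simp [P]) (by simp [Q]) fun k m hkm ↦ ?_
      obtain rfl : n = k + m := by lia
      have hpow : p ^ (k + m) * p⁻¹ ^ m = p ^ k := by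
        rw [pow_add, mul_assoc, ← mul_pow, mul_inv_cancel₀ hp₀, one_pow, mul_one]
      simp only [P, Q, pow_succ (p ^ (k + m)) k]
      linear_combination
        (p ^ (k + m)) ^ k * (p ^ (k + m) * p⁻¹ ^ m) * serreCoeff_succ_left_mul hp k m
          - (p ^ (k + m)) ^ k * serreCoeff p k (m + 1) * quantumInt p (m + 1) * hpow

/-- The value on `serreElement p N x y` of a twisted derivation `e`, with twist `σ`, such that
`σ x = s • x`, `σ y = t • y`, `e x = 1` and `e y = 0`. -/
def serreDerivative (p : K) (N : ℕ) (s t : K) (x y : R) : R :=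
  ∑ km ∈ antidiagonal N, serreCoeff p km.1 km.2 •
    ((∑ l ∈ Finset.range km.1, s ^ l) • (x ^ (km.1 - 1) * y * x ^ km.2) +
      (s ^ km.1 * t * ∑ l ∈ Finset.range km.2, s ^ l) • (x ^ km.1 * y * x ^ (km.2 - 1)))

lemma serreDerivative_eq_zero {p : K} (hp : ∀ k, quantumInt p (k + 1) ≠ 0) (n : ℕ) (x y : R) :
    serreDerivative p (n + 1) (p⁻¹ ^ 2) (p ^ n) x y = 0 := by
  have hp₀ := ne_zero_of_quantumInt_ne_zero hp
  simp only [serreDerivative, smul_add, smul_smul, sum_inv_sq_pow_eq_quantumInt hp₀]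
  refine sum_antidiagonal_add_eq_zero
    (P := fun k m ↦ (serreCoeff p k m * (p * p⁻¹ ^ k * quantumInt p k)) •
      (x ^ (k - 1) * y * x ^ m))
    (Q := fun k m ↦ (serreCoeff p k m * ((p⁻¹ ^ 2) ^ k * p ^ n *
      (p * p⁻¹ ^ m * quantumInt p m))) • (x ^ k * y * x ^ (m - 1)))
    _ (by simp) (by simp) fun k m hkm ↦ ?_
  obtain rfl : n = k + m := by lia
  have hpow : (p⁻¹ ^ 2) ^ k * p ^ (k + m) * (p * p⁻¹ ^ (m + 1)) = p * p⁻¹ ^ (k + 1) := by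
    simp only [inv_pow]
    field_simp
    ring
  simp only [Nat.add_sub_cancel, ← add_smul]
  convert zero_smul K _
  linear_combination p * p⁻¹ ^ (k + 1) * serreCoeff_succ_left_mul hp k m
    + serreCoeff p k (m + 1) * quantumInt p (m + 1) * hpow

/-- The value on a generator `x` of the algebra homomorphism `a ↦ !![σ a, e a; 0, a]` attached to a
`σ`-twisted derivation `e`, when `σ x = s • x` and `e x = ε`. -/
def skewMatrix (s ε : K) (x : R) : Matrix (Fin 2) (Fin 2) R := !![s • x, algebraMap K R ε; 0, x]

lemma skewMatrix_pow (s ε : K) (x : R) (k : ℕ) :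
    skewMatrix s ε x ^ k =
      !![s ^ k • x ^ k, (ε * ∑ l ∈ Finset.range k, s ^ l) • x ^ (k - 1); 0, x ^ k] := by
  induction k with
  | zero => simp [Matrix.one_fin_two]
  | succ k ih =>
    have hcorner : (s ^ k * ε) • x ^ k + (ε * ∑ l ∈ Finset.range k, s ^ l) • (x ^ (k - 1) * x) =
        (ε * ∑ l ∈ Finset.range (k + 1), s ^ l) • x ^ k := by
      cases k with
      | zero => simp
      | succ k =>
        rw [Nat.add_sub_cancel, ← pow_succ, ← add_smul, Finset.sum_range_succ _ (k + 1)]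
        ring_nf
    rw [pow_succ, ih, skewMatrix, Matrix.mul_fin_two, Nat.add_sub_cancel, ← hcorner]
    simp [Algebra.algebraMap_eq_smul_one, smul_smul, pow_succ, mul_comm]

lemma skewMatrix_pow_mul_mul_pow (s t ε η : K) (x y : R) (k m : ℕ) :
    skewMatrix s ε x ^ k * skewMatrix t η y * skewMatrix s ε x ^ m =
      !![(s ^ (k + m) * t) • (x ^ k * y * x ^ m),
        ε • ((∑ l ∈ Finset.range k, s ^ l) • (x ^ (k - 1) * y * x ^ m) +
          (s ^ k * t * ∑ l ∈ Finset.range m, s ^ l) • (x ^ k * y * x ^ (m - 1))) +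
        (η * s ^ k) • x ^ (k + m);
        0, x ^ k * y * x ^ m] := by
  rw [skewMatrix_pow, skewMatrix_pow, skewMatrix, Matrix.mul_fin_two, Matrix.mul_fin_two]
  simp only [Algebra.algebraMap_eq_smul_one, smul_mul_assoc, mul_smul_comm, smul_smul, mul_zero,
    zero_mul, add_zero, zero_add, mul_one, smul_zero, add_mul, smul_add, pow_add x]
  congr 3
  · module
  · congr 1
    module

lemma serreElement_skewMatrix (p : K) (N : ℕ) (s t ε η : K) (x y : R) :
    serreElement p N (skewMatrix s ε x) (skewMatrix t η y) =
      !![(s ^ N * t) • serreElement p N x y,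
        ε • serreDerivative p N s t x y +
          (η * ∑ km ∈ antidiagonal N, serreCoeff p km.1 km.2 * s ^ km.1) • x ^ N;
        0, serreElement p N x y] := by
  have hsum : ∀ km ∈ antidiagonal N, km.1 + km.2 = N := fun _ ↦ mem_antidiagonal.1
  simp only [serreElement, skewMatrix_pow_mul_mul_pow]
  ext i j
  rw [Matrix.sum_apply]
  fin_cases i <;> fin_cases j
  · simp only [Fin.zero_eta, Matrix.smul_apply, Matrix.of_apply, Matrix.cons_val_zero,
      Matrix.cons_val', Finset.smul_sum]
    refine Finset.sum_congr rfl fun km hkm ↦ ?_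
    rw [hsum km hkm, smul_comm]
  · simp only [Fin.zero_eta, Fin.mk_one, Matrix.smul_apply, Matrix.of_apply, Matrix.cons_val_zero,
      Matrix.cons_val_one, Matrix.cons_val_fin_one, Matrix.cons_val', serreDerivative]
    rw [Finset.smul_sum, Finset.mul_sum, Finset.sum_smul, ← Finset.sum_add_distrib]
    refine Finset.sum_congr rfl fun km hkm ↦ ?_
    rw [hsum km hkm]
    module
  · simp
  · simp

lemma serreElement_skewMatrix_eq_zero {p : K} (hp : ∀ k, quantumInt p (k + 1) ≠ 0) {n : ℕ}
    {x y : R} (hxy : serreElement p (n + 1) x y = 0) {s t ε η : K}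
    (hε : ε = 0 ∨ s = p⁻¹ ^ 2 ∧ t = p ^ n) (hη : η = 0 ∨ s = p ^ n) :
    serreElement p (n + 1) (skewMatrix s ε x) (skewMatrix t η y) = 0 := by
  rw [serreElement_skewMatrix, hxy]
  have hx_corner : ε • serreDerivative p (n + 1) s t x y = 0 := by
    rcases hε with rfl | ⟨rfl, rfl⟩
    · rw [zero_smul]
    · rw [serreDerivative_eq_zero hp, smul_zero]
  have hy_corner : η * ∑ km ∈ antidiagonal (n + 1), serreCoeff p km.1 km.2 * s ^ km.1 = 0 := by
    rcases hη with rfl | rfl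
    · rw [zero_mul]
    · rw [sum_serreCoeff_mul_pow_eq_zero hp, mul_zero]
  rw [hx_corner, hy_corner]
  ext i j
  fin_cases i <;> fin_cases j <;> simp

end SerreElement

section LeftInduction

lemma induction_left_of_adjoin_eq_top {K R : Type*} [CommSemiring K] [Semiring R] [Algebra K R]
    {s : Set R} (hs : Algebra.adjoin K s = ⊤) {motive : R → Prop} (one : motive 1)
    (add : ∀ a b, motive a → motive b → motive (a + b))
    (smul : ∀ (c : K) a, motive a → motive (c • a))
    (mul_left : ∀ x ∈ s, ∀ a, motive a → motive (x * a)) (a : R) : motive a := by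
  have ha : a ∈ Submodule.span K (Submonoid.closure s : Set R) := by
    rw [← Algebra.adjoin_eq_span, hs]
    exact Submodule.mem_top
  induction ha using Submodule.span_induction with
  | mem x hx => exact Submonoid.closure_induction_left one (fun x hx y _ ↦ mul_left x hx y) hx
  | zero => simpa using smul 0 1 one
  | add a b _ _ ha hb => exact add a b ha hb
  | smul c a _ ha => exact smul c a ha

lemma sum_map_eq_sum_support {ι M : Type*} [DecidableEq ι] [AddCommMonoid M] (w : ι → M)
    {L : List ι} {ν : ι →₀ ℕ} (hL : ∀ i, L.count i = ν i) :
    (L.map w).sum = ∑ j ∈ ν.support, ν j • w j := by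
  have hsupp : L.toFinset = ν.support := by
    ext i
    rw [List.mem_toFinset, Finsupp.mem_support_iff, ← hL, ← Nat.pos_iff_ne_zero, List.count_pos_iff]
  simp only [Finset.sum_list_map_count, hsupp, hL]

end LeftInduction

section QuantumParameter

lemma qq_ne_zero : qq ≠ 0 := RatFunc.X_ne_zero

lemma not_isOfFinOrder_ratFunc_X (K : Type*) [Field K] :
    ¬IsOfFinOrder (RatFunc.X : RatFunc K) := by
  rw [isOfFinOrder_iff_pow_eq_one]
  rintro ⟨n, hn, h⟩
  refine (RatFunc.transcendental_X (K := K)).pow hn ?_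
  rw [h]
  exact isAlgebraic_one

lemma not_isOfFinOrder_qq_zpow {d : ℤ} (hd : 0 < d) : ¬IsOfFinOrder (qq ^ d) := by
  lift d to ℕ using hd.le
  rw [zpow_natCast, isOfFinOrder_pow]
  exact fun h ↦ h.elim (not_isOfFinOrder_ratFunc_X ℚ) (by lia)

lemma quantumInt_qq_zpow_succ_ne_zero {d : ℤ} (hd : 0 < d) (k : ℕ) :
    quantumInt (qq ^ d) (k + 1) ≠ 0 :=
  quantumInt_succ_ne_zero (zpow_ne_zero _ qq_ne_zero) (not_isOfFinOrder_qq_zpow hd) k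

lemma qInt_eq_quantumInt {d : ℤ} (hd : 0 < d) (k : ℕ) : qInt d k = quantumInt (qq ^ d) k := by
  rw [quantumInt_eq_div (zpow_ne_zero _ qq_ne_zero) (not_isOfFinOrder_qq_zpow hd), qInt, zpow_neg,
    zpow_neg, zpow_mul, zpow_natCast, inv_pow]

lemma qFact_eq_quantumFactorial {d : ℤ} (hd : 0 < d) (k : ℕ) :
    qFact d k = quantumFactorial (qq ^ d) k :=
  Finset.prod_congr rfl fun _ _ ↦ qInt_eq_quantumInt hd _

lemma qZ_add (m n : ℤ) : qZ (m + n) = qZ m * qZ n := zpow_add₀ qq_ne_zero m n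

end QuantumParameter

section SerreRelation

omit [DecidableEq I]

variable {A : I → I → ℤ}

lemma adjoin_range_fgen (A : I → I → ℤ) : Algebra.adjoin KK (Set.range (fgen A)) = ⊤ := by
  have hsurj := (AlgHom.range_eq_top _).2 (RingQuot.mkAlgHom_surjective KK (SerreRel A))
  rw [← hsurj, ← Algebra.map_top, ← FreeAlgebra.adjoin_range_ι, AlgHom.map_adjoin, ← Set.range_comp]
  rfl

lemma IsCartan.half_pos (hA : IsCartan A) (i : I) : 0 < A i i / 2 := by
  have hpos := hA.2.1 i
  have heven := hA.2.2.1 i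
  lia

lemma map_fSerre {i : I} (hi : 0 < A i i / 2) (j : I) {R : Type*} [Ring R] [Algebra KK R]
    (φ : FreeAlgebra KK I →ₐ[KK] R) :
    φ (fSerre A i j) = serreElement (qq ^ (A i i / 2)) (serreN A i j)
      (φ (FreeAlgebra.ι KK i)) (φ (FreeAlgebra.ι KK j)) := by
  rw [serreElement, Finset.Nat.sum_antidiagonal_eq_sum_range_succ_mk]
  simp only [fSerre, serreCoeff, map_sum, map_smul, map_mul, map_pow,
    qFact_eq_quantumFactorial hi]

lemma serreElement_fgen {i j : I} (hi : 0 < A i i / 2) (hij : i ≠ j) :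
    serreElement (qq ^ (A i i / 2)) (serreN A i j) (fgen A i) (fgen A j) = 0 := by
  rw [fgen, fgen, ← map_fSerre hi, RingQuot.mkAlgHom_rel KK (SerreRel.serre i j hij), map_zero]

lemma IsCartan.exists_serreN_eq (hA : IsCartan A) {i j : I} (hij : i ≠ j) :
    ∃ n : ℕ, serreN A i j = n + 1 ∧ -A i j = A i i / 2 * n := by
  obtain ⟨-, hpos, heven, hneg, hdvd⟩ := hA
  obtain ⟨d, hd⟩ := heven i
  obtain ⟨c, hc⟩ := hdvd i j
  have hd_pos : 0 < d := by have := hpos i; lia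
  have hAij : A i j = d * c := by
    rw [hd, mul_assoc] at hc
    lia
  have hc_nonpos : c ≤ 0 := nonpos_of_mul_nonpos_right (hAij ▸ hneg i j hij) hd_pos
  obtain ⟨n, rfl⟩ := Int.exists_eq_neg_ofNat hc_nonpos
  refine ⟨n, ?_, ?_⟩
  · rw [serreN, hc, Int.mul_ediv_cancel_left _ (hpos i).ne']
    lia
  · rw [hd, Int.mul_ediv_cancel_left _ two_ne_zero, hAij, mul_neg, neg_neg]

lemma IsCartan.qZ_neg_self (hA : IsCartan A) (i : I) :
    qZ (-A i i) = (qq ^ (A i i / 2))⁻¹ ^ 2 := by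
  rw [← zpow_neg, ← zpow_natCast, ← zpow_mul, qZ]
  congr 1
  have := hA.2.2.1 i
  push_cast
  lia

end SerreRelation

section SkewDerivation

variable {A : I → I → ℤ}

/-- The matrix `!![Ad(t_l) f_i, e_l' f_i; 0, f_i]` that `skewHom` assigns to the generator `f_i`. -/
def skewGenerator (A : I → I → ℤ) (l i : I) : Matrix (Fin 2) (Fin 2) (Um A) :=
  skewMatrix (qZ (-A l i)) (if l = i then 1 else 0) (fgen A i)

lemma serreElement_skewGenerator (hA : IsCartan A) (l : I) {i j : I} (hij : i ≠ j) :
    serreElement (qq ^ (A i i / 2)) (serreN A i j) (skewGenerator A l i) (skewGenerator A l j) =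
      0 := by
  have hserre := serreElement_fgen (hA.half_pos i) hij
  obtain ⟨n, hn, hAij⟩ := hA.exists_serreN_eq hij
  have hqZ : qZ (-A i j) = (qq ^ (A i i / 2)) ^ n := by
    rw [qZ, hAij, zpow_mul, zpow_natCast]
  rw [hn] at hserre ⊢
  refine serreElement_skewMatrix_eq_zero (quantumInt_qq_zpow_succ_ne_zero (hA.half_pos i)) hserre
    ?_ ?_
  · by_cases hl : l = i
    · subst hl
      exact .inr ⟨hA.qZ_neg_self l, hqZ⟩
    · exact .inl (if_neg hl)
  · by_cases hl : l = j
    · subst hl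
      exact .inr (by rw [hA.1 l i, hqZ])
    · exact .inl (if_neg hl)

/-- The algebra homomorphism `a ↦ !![Ad(t_l) a, e_l' a; 0, a]`; its multiplicativity is the twisted
Leibniz rule for `e_l'`. -/
def skewHom (hA : IsCartan A) (l : I) : Um A →ₐ[KK] Matrix (Fin 2) (Fin 2) (Um A) :=
  RingQuot.liftAlgHom KK ⟨FreeAlgebra.lift KK (skewGenerator A l), by
    rintro _ _ ⟨i, j, hij⟩
    simpa only [map_fSerre (hA.half_pos i), FreeAlgebra.lift_ι_apply, map_zero] using
      serreElement_skewGenerator hA l hij⟩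

lemma skewHom_fgen (hA : IsCartan A) (l i : I) : skewHom hA l (fgen A i) = skewGenerator A l i := by
  rw [skewHom, fgen, RingQuot.liftAlgHom_mkAlgHom_apply, FreeAlgebra.lift_ι_apply]

lemma skewHom_fgen_mul_apply_zero_one (hA : IsCartan A) (l i : I) (a : Um A) :
    skewHom hA l (fgen A i * a) 0 1 =
      qZ (-A l i) • (fgen A i * skewHom hA l a 0 1) +
        (if l = i then skewHom hA l a 1 1 else 0) := by
  simp [skewHom_fgen, skewGenerator, skewMatrix, Matrix.mul_apply]

lemma skewHom_apply_one_one (hA : IsCartan A) (l : I) (a : Um A) : skewHom hA l a 1 1 = a := by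
  induction a using induction_left_of_adjoin_eq_top (adjoin_range_fgen A) with
  | one => simp
  | add a b ha hb => simp [ha, hb]
  | smul c a ha => simp [ha]
  | mul_left x hx a ha =>
    obtain ⟨i, rfl⟩ := hx
    simp [skewHom_fgen, skewGenerator, skewMatrix, Matrix.mul_apply, ha]

/-- Kashiwara's operator `e_l'`, read off as the upper right entry of `skewHom`. -/
def eprim (hA : IsCartan A) (l : I) : Module.End KK (Um A) :=
  Matrix.entryLinearMap KK (Um A) 0 1 ∘ₗ (skewHom hA l).toLinearMap

lemma eprimRel_eprim (hA : IsCartan A) : EprimRel A (eprim hA) := by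
  refine ⟨fun i ↦ by simp [eprim], fun i j a ↦ ?_⟩
  have h := skewHom_fgen_mul_apply_zero_one hA i j a
  rwa [skewHom_apply_one_one, add_comm] at h

lemma EprimRel.eq {E F : I → Module.End KK (Um A)} (hE : EprimRel A E) (hF : EprimRel A F) :
    E = F := by
  ext i a
  induction a using induction_left_of_adjoin_eq_top (adjoin_range_fgen A) with
  | one => rw [hE.1, hF.1]
  | add a b ha hb => rw [map_add, map_add, ha, hb]
  | smul c a ha => rw [map_smul, map_smul, ha]
  | mul_left x hx a ha =>
    obtain ⟨j, rfl⟩ := hx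
    rw [hE.2, hF.2, ha]

lemma EprimRel.map_prod_mul {E : I → Module.End KK (Um A)} (hE : EprimRel A E) (i : I)
    (L : List I) (b : Um A) :
    E i ((L.map (fgen A)).prod * b) = E i (L.map (fgen A)).prod * b +
      qZ (-(L.map (A i)).sum) • (L.map (fgen A)).prod * E i b := by
  induction L with
  | nil => simp [hE.1, qZ]
  | cons j L ih =>
    simp only [List.map_cons, List.prod_cons, List.sum_cons, neg_add, qZ_add, mul_assoc, hE.2, ih]
    simp only [mul_add, smul_add, add_mul, mul_smul_comm, smul_smul, smul_mul_assoc, mul_assoc,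
      ite_mul, zero_mul, add_assoc]

lemma EprimRel.map_mul_of_isWt {E : I → Module.End KK (Um A)} (hE : EprimRel A E) (i : I)
    {ν : I →₀ ℕ} {a : Um A} (ha : IsWt A ν a) (b : Um A) :
    E i (a * b) = E i a * b + qZ (-∑ j ∈ ν.support, (ν j : ℤ) * A i j) • a * E i b := by
  induction ha using Submodule.span_induction with
  | mem x hx =>
    obtain ⟨L, hL, rfl⟩ := hx
    simp only [hE.map_prod_mul, sum_map_eq_sum_support (A i) hL, nsmul_eq_mul]
  | zero => simp
  | add x y _ _ hx hy =>
    rw [add_mul, map_add, hx, hy, map_add, smul_add, add_mul, add_mul]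
    abel
  | smul c x _ hx =>
    rw [smul_mul_assoc, map_smul, hx, map_smul, smul_add, smul_comm _ c, smul_mul_assoc c,
      smul_mul_assoc c]

end SkewDerivation

theorem stmt0 (A : I → I → ℤ) (hA : IsCartan A) :
    (∃! E : I → Module.End KK (Um A), EprimRel A E) ∧
    (∀ E : I → Module.End KK (Um A), EprimRel A E →
      ∀ i (ν : I →₀ ℕ) (a b : Um A), IsWt A ν a →
        E i (a * b) = E i a * b
          + (qZ (-(∑ j ∈ ν.support, (ν j : ℤ) * A i j)) • a) * E i b) :=
  ⟨⟨eprim hA, eprimRel_eprim hA, fun _ hE ↦ hE.eq (eprimRel_eprim hA)⟩,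
    fun _ hE i _ _ b ha ↦ hE.map_mul_of_isWt i ha b⟩
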